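/- arXiv:1102.5606 — 2 statements merged into one kernel-verified Lean document; each statement's English description precedes it below -/
import Mathlib

section
/- Let σ > 0, ρ ∈ (0,1), and let Z₁, Z₂ be independent standard Gaussian random variables; set X_s := σ Z₁ and X_t := σ(ρ Z₁ + √(1−ρ²) Z₂), so that (X_s, X_t) is a centred bivariate Gaussian vector with common variance σ² and correlation ρ. Let h : ℝ → ℝ be strictly increasing and continuous, satisfy condition [A₊] with parameter b₊ > 0, and satisfy h(−x)/h(x) → 0 as x → +∞. Then P(h(X_t) − h(X_s) > y) / P(h(X_t) > y) → 1 as y → ∞; in particular the right tail of the increment h(X_t) − h(X_s) is regularly varying at infinity with the same index −β₊ = −1/(2 b₊ σ²) as the right tail of h(X_t). -/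
open MeasureTheory ProbabilityTheory Filter Real Set

open scoped NNReal Topology Asymptotics

/-!
Write `h ∼ exp ∘ F` with `F' x / x → 2 b`, and let `g` be the inverse of `exp ∘ F` near `+∞`.
Since `F'` is asymptotically `b` times the derivative of `x ^ 2`, Cauchy's mean value theorem turns
`F (g (l y)) - F (g y) = log l` into `g (l y) ^ 2 - g y ^ 2 → log l / b`, and the Mills ratio then
shows that `P(X > g y)`, with `X` centred Gaussian of variance `v`, is regularly varying of index
`-1 / (2 b v)`. As `h (g y)` equals `y` up to a factor tending to `1`, regular variation gives
`P(h X > y) ∼ P(X > g y)`.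

A difference `h X - h Y` exceeds `y` essentially only when `h X` does. First, `P(-h Y > y)` is
negligible because `h (-x) = o(h x)`. Secondly, if `h X` and `h Y` both exceed `y`, then `X + Y`
exceeds `2 g (y / 2)`, and this is negligible because the variance of `X + Y` is less than `4 v`:
the Gaussian exponent `(2 g) ^ 2 / Var (X + Y)` exceeds `g ^ 2 / v` by a multiple of `g ^ 2`.
-/

/-- Regular variation at `+∞` with index `α` of an eventually positive function; the tails below
have negative index. Measurability of `G` is not part of the definition. -/
structure IsRegularlyVarying (G : ℝ → ℝ) (α : ℝ) : Prop where
  eventually_pos : ∀ᶠ y in atTop, 0 < G y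
  tendsto_div : ∀ l : ℝ, 0 < l → Tendsto (fun y => G (l * y) / G y) atTop (𝓝 (l ^ α))

namespace IsRegularlyVarying

variable {A G N : ℝ → ℝ} {α : ℝ}

lemma isBigO_comp_const_mul (hG : IsRegularlyVarying G α) {l : ℝ} (hl : 0 < l) :
    (fun y => G (l * y)) =O[atTop] G :=
  Asymptotics.isBigO_of_div_tendsto_nhds
    (hG.eventually_pos.mono fun _ hy h0 => absurd h0 hy.ne') _ (hG.tendsto_div l hl)

lemma isLittleO_comp_const_mul (hG : IsRegularlyVarying G α) (hN : N =o[atTop] G) {l : ℝ}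
    (hl : 0 < l) : (fun y => N (l * y)) =o[atTop] G :=
  (hN.comp_tendsto (tendsto_id.const_mul_atTop hl)).trans_isBigO (hG.isBigO_comp_const_mul hl)

lemma isLittleO_of_forall_le_comp_const_mul (hG : IsRegularlyVarying G α) (hα : α < 0)
    (hN₀ : ∀ y, 0 ≤ N y) (hN : ∀ K : ℝ, 0 < K → ∀ᶠ y in atTop, N y ≤ G (K * y)) :
    N =o[atTop] G := by
  refine Asymptotics.isLittleO_iff.2 fun c hc => ?_
  have hpow : Tendsto (fun K : ℝ => K ^ α) atTop (𝓝 0) := by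
    simpa using tendsto_rpow_neg_atTop (neg_pos.2 hα)
  obtain ⟨K, hKc, hK⟩ := ((hpow.eventually_lt_const hc).and (eventually_gt_atTop 0)).exists
  filter_upwards [hG.eventually_pos, hN K hK, (hG.tendsto_div K hK).eventually_lt_const hKc]
    with y hGy hNy hlt
  rw [norm_of_nonneg (hN₀ y), norm_of_nonneg hGy.le]
  exact hNy.trans ((div_lt_iff₀ hGy).1 hlt).le

lemma of_isEquivalent (hG : IsRegularlyVarying G α) (hAG : A ~[atTop] G) :
    IsRegularlyVarying A α where
  eventually_pos := hAG.eventually_pos hG.eventually_pos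
  tendsto_div l hl :=
    ((hAG.comp_tendsto (tendsto_id.const_mul_atTop hl)).div hAG).symm.tendsto_nhds
      (hG.tendsto_div l hl)

lemma eventually_div_lt_of_le_dilation (hG : IsRegularlyVarying G α)
    (hA : ∀ κ ∈ Ioo (0 : ℝ) 1, ∃ N : ℝ → ℝ, N =o[atTop] G ∧
      ∀ᶠ y in atTop, A y ≤ G (κ * y) + N y) {a : ℝ} (ha : 1 < a) :
    ∀ᶠ y in atTop, A y / G y < a := by
  have hpow : Tendsto (fun κ : ℝ => κ ^ α) (𝓝[<] 1) (𝓝 1) := by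
    simpa using (continuousAt_rpow_const 1 α (.inl one_ne_zero)).tendsto.mono_left
      nhdsWithin_le_nhds
  obtain ⟨κ, hκa, hκ⟩ :=
    ((hpow.eventually_lt_const ha).and (Ioo_mem_nhdsLT zero_lt_one)).exists
  obtain ⟨N, hN, hle⟩ := hA κ hκ
  have hlim := (hG.tendsto_div κ hκ.1).add hN.tendsto_div_nhds_zero
  rw [add_zero] at hlim
  filter_upwards [hle, hG.eventually_pos, hlim.eventually_lt_const hκa] with y hAy hGy hlt
  rw [← add_div] at hlt
  exact (div_le_div_of_nonneg_right hAy hGy.le).trans_lt hlt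

lemma eventually_lt_div_of_dilation_le (hG : IsRegularlyVarying G α)
    (hA : ∀ κ : ℝ, 1 < κ → ∃ N : ℝ → ℝ, N =o[atTop] G ∧
      ∀ᶠ y in atTop, G (κ * y) ≤ A y + N y) {a : ℝ} (ha : a < 1) :
    ∀ᶠ y in atTop, a < A y / G y := by
  have hpow : Tendsto (fun κ : ℝ => κ ^ α) (𝓝[>] 1) (𝓝 1) := by
    simpa using (continuousAt_rpow_const 1 α (.inl one_ne_zero)).tendsto.mono_left
      nhdsWithin_le_nhds
  obtain ⟨κ, hκa, hκ⟩ :=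
    ((hpow.eventually_const_lt ha).and self_mem_nhdsWithin).exists
  obtain ⟨N, hN, hle⟩ := hA κ hκ
  have hlim := (hG.tendsto_div κ (zero_lt_one.trans hκ)).sub hN.tendsto_div_nhds_zero
  rw [sub_zero] at hlim
  filter_upwards [hle, hG.eventually_pos, hlim.eventually_const_lt hκa] with y hAy hGy hlt
  rw [← sub_div] at hlt
  exact hlt.trans_le (div_le_div_of_nonneg_right (sub_le_iff_le_add.2 hAy) hGy.le)

lemma isEquivalent_of_dilation_bounds (hG : IsRegularlyVarying G α)
    (hupper : ∀ κ ∈ Ioo (0 : ℝ) 1, ∃ N : ℝ → ℝ, N =o[atTop] G ∧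
      ∀ᶠ y in atTop, A y ≤ G (κ * y) + N y)
    (hlower : ∀ κ : ℝ, 1 < κ → ∃ N : ℝ → ℝ, N =o[atTop] G ∧
      ∀ᶠ y in atTop, G (κ * y) ≤ A y + N y) :
    A ~[atTop] G :=
  Asymptotics.isEquivalent_of_tendsto_one <| tendsto_order.2
    ⟨fun _ => hG.eventually_lt_div_of_dilation_le hlower,
      fun _ => hG.eventually_div_lt_of_le_dilation hupper⟩

end IsRegularlyVarying

section TailOfDifference

variable {Ω : Type*} {mΩ : MeasurableSpace Ω} {μ : Measure Ω} [IsFiniteMeasure μ]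

lemma isEquivalent_measureReal_lt_sub {X Y : Ω → ℝ} {α : ℝ}
    (hX : IsRegularlyVarying (fun y => μ.real {ω | y < X ω}) α)
    (hY : (fun y => μ.real {ω | y < -Y ω}) =o[atTop] fun y => μ.real {ω | y < X ω})
    (hXY : (fun y => μ.real {ω | y < X ω ∧ y < Y ω}) =o[atTop] fun y => μ.real {ω | y < X ω}) :
    (fun y => μ.real {ω | y < X ω - Y ω}) ~[atTop] fun y => μ.real {ω | y < X ω} := by
  refine hX.isEquivalent_of_dilation_bounds
    (fun κ hκ => ⟨_, hX.isLittleO_comp_const_mul hY (sub_pos.2 hκ.2), .of_forall fun y => ?_⟩)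
    (fun κ hκ => ⟨_, hX.isLittleO_comp_const_mul hXY (sub_pos.2 hκ), ?_⟩)
  · refine (measureReal_mono fun ω hω => ?_).trans (measureReal_union_le _ _)
    simp only [mem_union, mem_ofPred_eq] at hω ⊢
    by_contra! hcon
    linarith [hcon.1, hcon.2]
  · filter_upwards [eventually_gt_atTop 0] with y hy
    refine (measureReal_mono fun ω hω => ?_).trans (measureReal_union_le _ _)
    simp only [mem_union, mem_ofPred_eq] at hω ⊢
    rcases le_or_gt (Y ω) ((κ - 1) * y) with hle | hlt
    · left
      linarith
    · right
      exact ⟨by linarith, hlt⟩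

lemma isLittleO_measureReal_lt_neg_comp {X : Ω → ℝ} {h : ℝ → ℝ} {α : ℝ} (hα : α < 0)
    (hmono : Monotone h) (htop : Tendsto h atTop atTop)
    (hsmall : Tendsto (fun x => h (-x) / h x) atTop (𝓝 0))
    (hX : IsRegularlyVarying (fun y => μ.real {ω | y < h (-X ω)}) α) :
    (fun y => μ.real {ω | y < -h (X ω)}) =o[atTop] fun y => μ.real {ω | y < h (-X ω)} := by
  refine hX.isLittleO_of_forall_le_comp_const_mul hα (fun _ => measureReal_nonneg) fun K hK => ?_
  have hev : ∀ᶠ x in atTop, K * -h (-x) < h x := by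
    filter_upwards [hsmall.eventually_const_lt (neg_lt_zero.2 (inv_pos.2 hK)),
      htop.eventually_gt_atTop 0] with x hx hpos
    rw [lt_div_iff₀ hpos, neg_mul, neg_lt] at hx
    exact (lt_inv_mul_iff₀ hK).1 hx
  obtain ⟨x₀, hx₀⟩ := eventually_atTop.1 hev
  filter_upwards [eventually_ge_atTop (-h (-x₀))] with y hy
  refine measureReal_mono fun ω (hω : y < -h (X ω)) => ?_
  have hXω : X ω < -x₀ := hmono.reflect_lt (by linarith)
  have hKh := hx₀ (-X ω) (by linarith)
  rw [neg_neg] at hKh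
  exact (mul_lt_mul_of_pos_left hω hK).trans hKh

end TailOfDifference

/-- `g` is an inverse of `h` near `+∞` up to dilations: for large `y`, the superlevel set
`{x | y < h x}` lies between the half-lines `Ioi (g (κ * y))` with `κ > 1` and with `κ < 1`.
Regularly varying tails are insensitive to this slack, so `h` need not be invertible. -/
structure IsAsymptoticInverse (g h : ℝ → ℝ) : Prop where
  tendsto_atTop : Tendsto g atTop atTop
  lt_of_lt_apply : ∀ κ ∈ Ioo (0 : ℝ) 1, ∀ᶠ y in atTop, ∀ x, y < h x → g (κ * y) < x
  lt_apply_of_lt : ∀ κ : ℝ, 1 < κ → ∀ᶠ y in atTop, ∀ x, g (κ * y) < x → y < h x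

lemma eventually_const_mul_lt_of_isEquivalent {ι : Type*} {l : Filter ι} {u v : ι → ℝ} {c : ℝ}
    (huv : u ~[l] v) (hv : ∀ᶠ x in l, 0 < v x) (hc : c < 1) : ∀ᶠ x in l, c * u x < v x := by
  obtain ⟨φ, hφ, hvφ⟩ := huv.symm.exists_eq_mul
  filter_upwards [hvφ, hφ.eventually_const_lt hc, huv.eventually_pos hv] with x hx hcx hux
  rw [hx]
  exact mul_lt_mul_of_pos_right hcx hux

lemma exists_rightInverse_tendsto_atTop {E : ℝ → ℝ} {a : ℝ} (hcont : ContinuousOn E (Ici a))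
    (hmono : StrictMonoOn E (Ici a)) (htop : Tendsto E atTop atTop) :
    ∃ g : ℝ → ℝ, (∀ᶠ y in atTop, E (g y) = y) ∧ Tendsto g atTop atTop := by
  have hinv : ∀ y, E a ≤ y →
      Function.invFunOn E (Ici a) y ∈ Ici a ∧ E (Function.invFunOn E (Ici a) y) = y :=
    fun y hy => Function.invFunOn_pos (intermediate_value_Ici hcont htop hy)
  refine ⟨Function.invFunOn E (Ici a), (eventually_ge_atTop (E a)).mono fun y hy => (hinv y hy).2,
    tendsto_atTop.2 fun M => ?_⟩
  filter_upwards [eventually_ge_atTop (E a), eventually_ge_atTop (E (max a M))] with y hya hyM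
  obtain ⟨hmem, heq⟩ := hinv y hya
  rw [← heq, hmono.le_iff_le (le_max_left a M) hmem] at hyM
  exact (le_max_right a M).trans hyM

lemma isAsymptoticInverse_of_isEquivalent {E g h : ℝ → ℝ} {a : ℝ} (hmono : Monotone h)
    (hE : StrictMonoOn E (Ici a)) (hEtop : Tendsto E atTop atTop) (hhE : h ~[atTop] E)
    (hg : ∀ᶠ y in atTop, E (g y) = y) (hgtop : Tendsto g atTop atTop) :
    IsAsymptoticInverse g h where
  tendsto_atTop := hgtop
  lt_of_lt_apply κ hκ := by
    have hκy : Tendsto (κ * ·) atTop atTop := tendsto_id.const_mul_atTop hκ.1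
    obtain ⟨x₀, hx₀⟩ := eventually_atTop.1
      (eventually_const_mul_lt_of_isEquivalent hhE (hEtop.eventually_gt_atTop 0) hκ.2)
    filter_upwards [eventually_ge_atTop (h (max a x₀)), hκy.eventually hg,
      hκy.eventually (hgtop.eventually_ge_atTop a)] with y hy hEg hga x hyx
    have hx : max a x₀ < x := hmono.reflect_lt (hy.trans_lt hyx)
    rw [← hE.lt_iff_lt hga ((le_max_left a x₀).trans hx.le), hEg]
    exact (mul_lt_mul_of_pos_left hyx hκ.1).trans (hx₀ x ((le_max_right a x₀).trans hx.le))
  lt_apply_of_lt κ hκ := by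
    have hκ₀ : 0 < κ := zero_lt_one.trans hκ
    have hκy : Tendsto (κ * ·) atTop atTop := tendsto_id.const_mul_atTop hκ₀
    obtain ⟨x₀, hx₀⟩ := eventually_atTop.1 (eventually_const_mul_lt_of_isEquivalent hhE.symm
      ((hhE.symm.tendsto_atTop hEtop).eventually_gt_atTop 0) (inv_lt_one_of_one_lt₀ hκ))
    filter_upwards [hκy.eventually hg,
      hκy.eventually (hgtop.eventually_ge_atTop (max a x₀))] with y hEg hga x hgx
    have hlt : κ * y < E x := by
      rw [← hEg]
      exact hE ((le_max_left a x₀).trans hga) ((le_max_left a x₀).trans (hga.trans hgx.le)) hgx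
    exact ((lt_inv_mul_iff₀ hκ₀).2 hlt).trans
      (hx₀ x ((le_max_right a x₀).trans (hga.trans hgx.le)))

lemma IsAsymptoticInverse.isEquivalent_measureReal_lt {Ω : Type*} {mΩ : MeasurableSpace Ω}
    {μ : Measure Ω} [IsFiniteMeasure μ] {X : Ω → ℝ} {g h : ℝ → ℝ} {α : ℝ}
    (hg : IsAsymptoticInverse g h) (hX : IsRegularlyVarying (fun y => μ.real {ω | g y < X ω}) α) :
    (fun y => μ.real {ω | y < h (X ω)}) ~[atTop] fun y => μ.real {ω | g y < X ω} := by
  refine hX.isEquivalent_of_dilation_bounds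
    (fun κ hκ => ⟨0, Asymptotics.isLittleO_zero _ _, ?_⟩)
    (fun κ hκ => ⟨0, Asymptotics.isLittleO_zero _ _, ?_⟩)
  · filter_upwards [hg.lt_of_lt_apply κ hκ] with y hy
    rw [Pi.zero_apply, add_zero]
    exact measureReal_mono fun ω hω => hy _ hω
  · filter_upwards [hg.lt_apply_of_lt κ hκ] with y hy
    rw [Pi.zero_apply, add_zero]
    exact measureReal_mono fun ω hω => hy _ hω

section QuadraticGrowth

variable {F : ℝ → ℝ} {c : ℝ}

lemma tendsto_deriv_atTop_of_tendsto_deriv_div (hc : 0 < c)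
    (hF' : Tendsto (fun x => deriv F x / x) atTop (𝓝 c)) : Tendsto (deriv F) atTop atTop := by
  refine (hF'.pos_mul_atTop hc tendsto_id).congr' ?_
  filter_upwards [eventually_ne_atTop 0] with x hx
  exact div_mul_cancel₀ _ hx

lemma exists_strictMonoOn_Ici_of_tendsto_deriv_atTop (hF : Differentiable ℝ F)
    (hF' : Tendsto (deriv F) atTop atTop) : ∃ a, StrictMonoOn F (Ici a) := by
  obtain ⟨a, ha⟩ := eventually_atTop.1 (hF'.eventually_gt_atTop 0)
  exact ⟨a, strictMonoOn_of_deriv_pos (convex_Ici a) hF.continuous.continuousOn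
    fun x hx => ha x (interior_subset hx)⟩

lemma tendsto_atTop_of_tendsto_deriv_atTop (hF : Differentiable ℝ F)
    (hF' : Tendsto (deriv F) atTop atTop) : Tendsto F atTop atTop := by
  obtain ⟨a, ha⟩ := eventually_atTop.1 (hF'.eventually_ge_atTop 1)
  have hlin : Tendsto (fun x => F a + (x - a)) atTop atTop :=
    tendsto_atTop_add_const_left _ _ (tendsto_atTop_add_const_right _ (-a) tendsto_id)
  refine tendsto_atTop_mono' atTop ?_ hlin
  filter_upwards [eventually_ge_atTop a] with x hx
  have := (convex_Ici a).mul_sub_le_image_sub_of_le_deriv hF.continuous.continuousOn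
    hF.differentiableOn (fun y hy => ha y (interior_subset hy)) a self_mem_Ici x hx hx
  linarith

lemma exists_sq_sub_sq_mul_deriv_eq (hF : Differentiable ℝ F) (u w : ℝ) :
    ∃ ξ ∈ uIcc u w, (w ^ 2 - u ^ 2) * deriv F ξ = (F w - F u) * (2 * ξ) := by
  wlog huw : u ≤ w generalizing u w
  · obtain ⟨ξ, hξ, heq⟩ := this w u (le_of_not_ge huw)
    exact ⟨ξ, uIcc_comm w u ▸ hξ, by linarith⟩
  rcases huw.eq_or_lt with rfl | hlt
  · exact ⟨u, left_mem_uIcc, by simp⟩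
  obtain ⟨ξ, hξ, heq⟩ := exists_ratio_deriv_eq_ratio_slope F hlt hF.continuous.continuousOn
    hF.differentiableOn (fun x => x ^ 2) (by fun_prop) (by fun_prop)
  refine ⟨ξ, Icc_subset_uIcc (Ioo_subset_Icc_self hξ), ?_⟩
  simpa using heq

lemma tendsto_sq_sub_sq_of_tendsto_sub {ι : Type*} {l : Filter ι} {u w : ι → ℝ} {d : ℝ}
    (hF : Differentiable ℝ F) (hc : c ≠ 0)
    (hF' : Tendsto (fun x => deriv F x / x) atTop (𝓝 c)) (hu : Tendsto u l atTop)
    (hw : Tendsto w l atTop) (hd : Tendsto (fun i => F (w i) - F (u i)) l (𝓝 d)) :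
    Tendsto (fun i => w i ^ 2 - u i ^ 2) l (𝓝 (2 * d / c)) := by
  choose ξ hξmem hξ using fun i => exists_sq_sub_sq_mul_deriv_eq hF (u i) (w i)
  have hξtop : Tendsto ξ l atTop := by
    refine tendsto_atTop.2 fun M => ?_
    filter_upwards [hu.eventually_ge_atTop M, hw.eventually_ge_atTop M] with i hui hwi
    exact (le_min hui hwi).trans (hξmem i).1
  have hquot := hF'.comp hξtop
  refine ((hd.const_mul 2).div hquot hc).congr' ?_
  filter_upwards [hξtop.eventually_ne_atTop 0, hquot.eventually_ne hc] with i hξ₀ hdiv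
  have hderiv : deriv F (ξ i) ≠ 0 := (div_ne_zero_iff.1 hdiv).1
  simp only [Pi.div_apply, Function.comp]
  field_simp [hξ₀, hderiv]
  linarith [hξ i]

end QuadraticGrowth

/-- Condition [A₊] with parameter `b`: `h x = exp (b x² + f x + r x)` for large `x`, where
`f' x / x → 0` and `r x → 0` as `x → +∞`. -/
def ConditionAPlus (b : ℝ) (h : ℝ → ℝ) : Prop :=
  ∃ f r : ℝ → ℝ, Differentiable ℝ f ∧ Tendsto (fun x => deriv f x / x) atTop (𝓝 0) ∧
    Tendsto r atTop (𝓝 0) ∧ ∀ᶠ x in atTop, h x = exp (b * x ^ 2 + f x + r x)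

namespace ConditionAPlus

variable {b : ℝ} {h : ℝ → ℝ}

lemma exists_isEquivalent_exp (hA : ConditionAPlus b h) :
    ∃ F : ℝ → ℝ, Differentiable ℝ F ∧ Tendsto (fun x => deriv F x / x) atTop (𝓝 (2 * b)) ∧
      h ~[atTop] fun x => exp (F x) := by
  obtain ⟨f, r, hf, hf', hr, hrep⟩ := hA
  refine ⟨fun x => b * x ^ 2 + f x, by fun_prop, ?_, ?_⟩
  · have hlim := hf'.const_add (2 * b)
    rw [add_zero] at hlim
    refine hlim.congr' ?_
    filter_upwards [eventually_ne_atTop 0] with x hx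
    have hderiv : HasDerivAt (fun x => b * x ^ 2 + f x) (b * (2 * x) + deriv f x) x := by
      simpa using ((hasDerivAt_pow 2 x).const_mul b).fun_add (hf x).hasDerivAt
    rw [hderiv.deriv]
    field_simp
  · refine Asymptotics.isEquivalent_of_tendsto_one ?_
    have hexp : Tendsto (fun x => exp (r x)) atTop (𝓝 1) := by
      simpa using hr.rexp
    refine hexp.congr' ?_
    filter_upwards [hrep] with x hx
    rw [Pi.div_apply, hx, ← exp_sub, add_sub_cancel_left]

lemma tendsto_atTop (hA : ConditionAPlus b h) (hb : 0 < b) : Tendsto h atTop atTop := by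
  obtain ⟨F, hF, hF', hhF⟩ := hA.exists_isEquivalent_exp
  exact hhF.symm.tendsto_atTop <| tendsto_exp_atTop.comp <| tendsto_atTop_of_tendsto_deriv_atTop hF
    (tendsto_deriv_atTop_of_tendsto_deriv_div (by positivity) hF')

lemma exists_isAsymptoticInverse (hA : ConditionAPlus b h) (hb : 0 < b) (hmono : Monotone h) :
    ∃ g, IsAsymptoticInverse g h ∧
      ∀ l : ℝ, 0 < l → Tendsto (fun y => g (l * y) ^ 2 - g y ^ 2) atTop (𝓝 (log l / b)) := by
  obtain ⟨F, hF, hF', hhF⟩ := hA.exists_isEquivalent_exp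
  have hF'top := tendsto_deriv_atTop_of_tendsto_deriv_div (by positivity) hF'
  have hEtop : Tendsto (fun x => exp (F x)) atTop atTop :=
    tendsto_exp_atTop.comp (tendsto_atTop_of_tendsto_deriv_atTop hF hF'top)
  obtain ⟨a, ha⟩ := exists_strictMonoOn_Ici_of_tendsto_deriv_atTop hF hF'top
  have hEmono : StrictMonoOn (fun x => exp (F x)) (Ici a) := exp_strictMono.comp_strictMonoOn ha
  obtain ⟨g, hg, hgtop⟩ := exists_rightInverse_tendsto_atTop (E := fun x => exp (F x))
    hF.continuous.rexp.continuousOn hEmono hEtop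
  refine ⟨g, isAsymptoticInverse_of_isEquivalent hmono hEmono hEtop hhF hg hgtop, fun l hl => ?_⟩
  have hly : Tendsto (l * ·) atTop atTop := tendsto_id.const_mul_atTop hl
  have hFsub : Tendsto (fun y => F (g (l * y)) - F (g y)) atTop (𝓝 (log l)) := by
    refine tendsto_const_nhds.congr' ?_
    filter_upwards [hg, hly.eventually hg, eventually_ne_atTop 0] with y hy hgly hy₀
    rw [← log_exp (F (g y)), ← log_exp (F (g (l * y))), hy, hgly, log_mul hl.ne' hy₀,
      add_sub_cancel_right]
  have hlim := tendsto_sq_sub_sq_of_tendsto_sub hF (by positivity) hF' hgtop (hgtop.comp hly) hFsub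
  rwa [mul_div_mul_left _ _ two_ne_zero] at hlim

end ConditionAPlus

section StandardGaussianTail

/-- The right tail `P(Z > x)` of a standard Gaussian variable `Z`. -/
noncomputable def stdGaussianTail (x : ℝ) : ℝ := (gaussianReal 0 1).real (Ioi x)

lemma stdGaussianTail_eq_integral (x : ℝ) :
    stdGaussianTail x = ∫ t in Ioi x, gaussianPDFReal 0 1 t := by
  rw [stdGaussianTail, Measure.real, gaussianReal_apply_eq_integral _ one_ne_zero,
    ENNReal.toReal_ofReal (integral_nonneg (gaussianPDFReal_nonneg _ _))]

lemma gaussianPDFReal_zero_one (x : ℝ) :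
    gaussianPDFReal 0 1 x = (√(2 * π))⁻¹ * exp (-x ^ 2 / 2) := by
  simp [gaussianPDFReal]

lemma hasDerivAt_gaussianPDFReal_zero_one (x : ℝ) :
    HasDerivAt (gaussianPDFReal 0 1) (-(x * gaussianPDFReal 0 1 x)) x := by
  rw [funext gaussianPDFReal_zero_one]
  have hexponent : HasDerivAt (fun x : ℝ => -x ^ 2 / 2) (-x) x :=
    ((hasDerivAt_pow 2 x).fun_neg.div_const 2).congr_deriv (by ring)
  exact (hexponent.exp.const_mul (√(2 * π))⁻¹).congr_deriv (by ring)

lemma continuous_gaussianPDFReal_zero_one : Continuous (gaussianPDFReal 0 1) :=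
  continuous_iff_continuousAt.2 fun x => (hasDerivAt_gaussianPDFReal_zero_one x).continuousAt

lemma tendsto_gaussianPDFReal_zero_one_atTop : Tendsto (gaussianPDFReal 0 1) atTop (𝓝 0) := by
  rw [funext gaussianPDFReal_zero_one]
  have hexponent : Tendsto (fun x : ℝ => -x ^ 2 / 2) atTop atBot :=
    (tendsto_neg_atTop_atBot.comp (tendsto_pow_atTop two_ne_zero)).atBot_div_const two_pos
  simpa using (tendsto_exp_atBot.comp hexponent).const_mul (√(2 * π))⁻¹

lemma tendsto_stdGaussianTail_atTop : Tendsto stdGaussianTail atTop (𝓝 0) := by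
  rw [funext stdGaussianTail_eq_integral]
  exact tendsto_integral_Ioi_zero tendsto_id

lemma hasDerivAt_stdGaussianTail (x : ℝ) :
    HasDerivAt stdGaussianTail (-gaussianPDFReal 0 1 x) x := by
  have hint : ∀ s, IntegrableOn (gaussianPDFReal 0 1) s := fun s =>
    (integrable_gaussianPDFReal 0 1).integrableOn
  have heq : stdGaussianTail =
      fun x => stdGaussianTail 0 - ∫ t in (0 : ℝ)..x, gaussianPDFReal 0 1 t := by
    ext x
    rw [stdGaussianTail_eq_integral, stdGaussianTail_eq_integral,
      ← intervalIntegral.integral_interval_add_Ioi (hint (Ioi 0)) (hint (Ioi x)),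
      add_sub_cancel_left]
  rw [heq]
  exact (continuous_gaussianPDFReal_zero_one.integral_hasStrictDerivAt 0 x).hasDerivAt.const_sub _

theorem isEquivalent_stdGaussianTail :
    stdGaussianTail ~[atTop] fun x => gaussianPDFReal 0 1 x / x := by
  set φ := gaussianPDFReal 0 1
  have hφ : ∀ x, φ x ≠ 0 := fun x => (gaussianPDFReal_pos 0 1 x one_ne_zero).ne'
  have hderiv : ∀ x ≠ 0, HasDerivAt (fun x => φ x / x) (-((1 + 1 / x ^ 2) * φ x)) x := by
    intro x hx
    refine ((hasDerivAt_gaussianPDFReal_zero_one x).fun_div (hasDerivAt_id' x) hx).congr_deriv ?_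
    simp only [φ]
    field_simp
    ring
  have hsq : Tendsto (fun x : ℝ => 1 / x ^ 2) atTop (𝓝 0) :=
    tendsto_const_nhds.div_atTop (tendsto_pow_atTop two_ne_zero)
  have hratio : Tendsto (fun x => -φ x / -((1 + 1 / x ^ 2) * φ x)) atTop (𝓝 1) := by
    have hlim := (hsq.const_add 1).inv₀ (by simp)
    rw [add_zero, inv_one] at hlim
    refine hlim.congr fun x => ?_
    rw [neg_div_neg_eq, div_mul_cancel_right₀ (hφ x)]
  refine Asymptotics.isEquivalent_of_tendsto_one <| HasDerivAt.lhopital_zero_atTop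
    (.of_forall hasDerivAt_stdGaussianTail) ((eventually_ne_atTop 0).mono hderiv)
    (.of_forall fun x => neg_ne_zero.2 (mul_ne_zero (by positivity) (hφ x)))
    tendsto_stdGaussianTail_atTop ?_ hratio
  exact tendsto_gaussianPDFReal_zero_one_atTop.div_atTop tendsto_id

lemma eventually_stdGaussianTail_pos : ∀ᶠ x in atTop, 0 < stdGaussianTail x :=
  isEquivalent_stdGaussianTail.eventually_pos <| (eventually_gt_atTop 0).mono fun x hx =>
    div_pos (gaussianPDFReal_pos 0 1 x one_ne_zero) hx

variable {ι : Type*} {l : Filter ι} {u w : ι → ℝ}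

lemma isEquivalent_stdGaussianTail_comp_div (hu : Tendsto u l atTop) (hw : Tendsto w l atTop) :
    (fun i => stdGaussianTail (w i) / stdGaussianTail (u i)) ~[l]
      fun i => u i / w i * exp (-(w i ^ 2 - u i ^ 2) / 2) := by
  refine ((isEquivalent_stdGaussianTail.comp_tendsto hw).div
    (isEquivalent_stdGaussianTail.comp_tendsto hu)).trans_eventuallyEq (.of_eq ?_)
  ext i
  have hexp : -(w i ^ 2 - u i ^ 2) / 2 = -w i ^ 2 / 2 - -u i ^ 2 / 2 := by ring
  simp only [Pi.div_apply, Function.comp, gaussianPDFReal_zero_one, hexp, exp_sub]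
  field_simp

lemma tendsto_div_of_tendsto_sq_sub_sq {d : ℝ} (hu : Tendsto u l atTop) (hw : Tendsto w l atTop)
    (hd : Tendsto (fun i => w i ^ 2 - u i ^ 2) l (𝓝 d)) :
    Tendsto (fun i => u i / w i) l (𝓝 1) := by
  have hlim := (hd.div_atTop ((tendsto_pow_atTop two_ne_zero).comp hw)).const_sub 1
  rw [sub_zero] at hlim
  have hsqrt := hlim.sqrt
  rw [sqrt_one] at hsqrt
  refine hsqrt.congr' ?_
  filter_upwards [hu.eventually_ge_atTop 0, hw.eventually_gt_atTop 0] with i hui hwi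
  rw [← sqrt_sq (div_nonneg hui hwi.le)]
  congr 1
  simp only [Function.comp]
  field_simp
  ring

lemma tendsto_stdGaussianTail_div_of_tendsto_sq_sub_sq {d : ℝ} (hu : Tendsto u l atTop)
    (hw : Tendsto w l atTop) (hd : Tendsto (fun i => w i ^ 2 - u i ^ 2) l (𝓝 d)) :
    Tendsto (fun i => stdGaussianTail (w i) / stdGaussianTail (u i)) l (𝓝 (exp (-d / 2))) := by
  have hlim := (tendsto_div_of_tendsto_sq_sub_sq hu hw hd).mul (hd.neg.div_const 2).rexp
  rw [one_mul] at hlim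
  exact (isEquivalent_stdGaussianTail_comp_div hu hw).symm.tendsto_nhds hlim

lemma isLittleO_stdGaussianTail_of_tendsto_sq_sub_sq_atTop (hu : Tendsto u l atTop)
    (hw : Tendsto w l atTop) (hd : Tendsto (fun i => w i ^ 2 - u i ^ 2) l atTop) :
    (fun i => stdGaussianTail (w i)) =o[l] fun i => stdGaussianTail (u i) := by
  refine Asymptotics.isLittleO_of_tendsto'
    ((hu.eventually eventually_stdGaussianTail_pos).mono fun i hi h0 => absurd h0 hi.ne') ?_
  refine (isEquivalent_stdGaussianTail_comp_div hu hw).symm.tendsto_nhds ?_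
  have hexp : Tendsto (fun i => exp (-(w i ^ 2 - u i ^ 2) / 2)) l (𝓝 0) :=
    tendsto_exp_atBot.comp ((tendsto_neg_atTop_atBot.comp hd).atBot_div_const two_pos)
  refine tendsto_of_tendsto_of_tendsto_of_le_of_le' tendsto_const_nhds hexp ?_ ?_
  · filter_upwards [hu.eventually_ge_atTop 0, hw.eventually_ge_atTop 0] with i hui hwi
    exact mul_nonneg (div_nonneg hui hwi) (exp_nonneg _)
  · filter_upwards [hd.eventually_ge_atTop 0, hw.eventually_gt_atTop 0] with i hdi hwi
    have huw : u i ≤ w i := le_of_sq_le_sq (sub_nonneg.1 hdi) hwi.le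
    exact mul_le_of_le_one_left (exp_nonneg _) ((div_le_one hwi).2 huw)

end StandardGaussianTail

section GaussianTail

variable {v w : ℝ≥0} {g : ℝ → ℝ} {b : ℝ}

lemma gaussianReal_real_Ioi_eq_stdGaussianTail (hv : v ≠ 0) (x : ℝ) :
    (gaussianReal 0 v).real (Ioi x) = stdGaussianTail (x / √v) := by
  have hsqrt : 0 < √(v : ℝ) := sqrt_pos.2 (NNReal.coe_pos.2 (pos_iff_ne_zero.2 hv))
  have hmap : gaussianReal 0 v = (gaussianReal 0 1).map (√v * ·) := by
    rw [gaussianReal_map_const_mul, mul_zero, mul_one]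
    congr 1
    ext
    simp
  rw [hmap, map_measureReal_apply (by fun_prop) measurableSet_Ioi, stdGaussianTail]
  congr 1
  ext x
  simp [div_lt_iff₀ hsqrt, mul_comm]

lemma isRegularlyVarying_gaussianReal_real_Ioi (hv : v ≠ 0) (hg : Tendsto g atTop atTop)
    (hsq : ∀ l : ℝ, 0 < l →
      Tendsto (fun y => g (l * y) ^ 2 - g y ^ 2) atTop (𝓝 (log l / b))) :
    IsRegularlyVarying (fun y => (gaussianReal 0 v).real (Ioi (g y))) (-(1 / (2 * b * v))) := by
  have hv' : (0 : ℝ) < v := NNReal.coe_pos.2 (pos_iff_ne_zero.2 hv)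
  have hgv : Tendsto (fun y => g y / √v) atTop atTop := hg.atTop_div_const (sqrt_pos.2 hv')
  simp only [gaussianReal_real_Ioi_eq_stdGaussianTail hv]
  refine ⟨hgv.eventually eventually_stdGaussianTail_pos, fun l hl => ?_⟩
  have hpow : l ^ (-(1 / (2 * b * v))) = exp (-(log l / b / v) / 2) := by
    rw [rpow_def_of_pos hl]
    congr 1
    field_simp
  rw [hpow]
  refine tendsto_stdGaussianTail_div_of_tendsto_sq_sub_sq hgv
    (hgv.comp (tendsto_id.const_mul_atTop hl)) (((hsq l hl).div_const (v : ℝ)).congr fun y => ?_)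
  simp only [div_pow, sq_sqrt hv'.le, sub_div]

lemma isLittleO_gaussianReal_real_Ioi_two_mul (hwv : w < 4 * v)
    (hg : Tendsto g atTop atTop) {d κ : ℝ} (hκ : 0 < κ)
    (hsq : Tendsto (fun y => g (κ * y) ^ 2 - g y ^ 2) atTop (𝓝 d)) :
    (fun y => (gaussianReal 0 w).real (Ioi (2 * g (κ * y)))) =o[atTop]
      fun y => (gaussianReal 0 v).real (Ioi (g y)) := by
  have hgκ : Tendsto (fun y => g (κ * y)) atTop atTop :=
    hg.comp (tendsto_id.const_mul_atTop hκ)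
  have hgκ₂ : Tendsto (fun y => 2 * g (κ * y)) atTop atTop := hgκ.const_mul_atTop two_pos
  have hv : v ≠ 0 := by
    rintro rfl
    simp at hwv
  rcases eq_or_ne w 0 with rfl | hw
  · refine (Asymptotics.isLittleO_zero _ _).congr' ?_ .rfl
    filter_upwards [hgκ₂.eventually_ge_atTop 0] with y hy
    simp [measureReal_def, hy]
  have hv' : (0 : ℝ) < v := NNReal.coe_pos.2 (pos_iff_ne_zero.2 hv)
  have hw' : (0 : ℝ) < w := NNReal.coe_pos.2 (pos_iff_ne_zero.2 hw)
  have hwv' : (w : ℝ) < 4 * v := mod_cast hwv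
  have hcoeff : (0 : ℝ) < 4 / w - 1 / v := by
    rwa [sub_pos, div_lt_div_iff₀ hv' hw', one_mul]
  simp only [gaussianReal_real_Ioi_eq_stdGaussianTail hv,
    gaussianReal_real_Ioi_eq_stdGaussianTail hw]
  refine isLittleO_stdGaussianTail_of_tendsto_sq_sub_sq_atTop
    (hg.atTop_div_const (sqrt_pos.2 hv')) (hgκ₂.atTop_div_const (sqrt_pos.2 hw')) ?_
  refine ((((tendsto_pow_atTop two_ne_zero).comp hgκ).const_mul_atTop hcoeff).atTop_add
    (hsq.div_const (v : ℝ))).congr fun y => ?_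
  simp only [Function.comp, div_pow, mul_pow, sq_sqrt hv'.le, sq_sqrt hw'.le]
  ring

end GaussianTail

section GaussianLaw

variable {Ω : Type*} {mΩ : MeasurableSpace Ω} {μ : Measure Ω}

lemma hasLaw_linearCombination_gaussianReal {Z₁ Z₂ : Ω → ℝ} (hZ₁ : HasLaw Z₁ (gaussianReal 0 1) μ)
    (hZ₂ : HasLaw Z₂ (gaussianReal 0 1) μ) (hindep : IndepFun Z₁ Z₂ μ) {p q : ℝ} {v : ℝ≥0}
    (hv : p ^ 2 + q ^ 2 = v) :
    HasLaw (fun ω => p * Z₁ ω + q * Z₂ ω) (gaussianReal 0 v) μ := by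
  have hp := gaussianReal_const_mul hZ₁ p
  have hq := gaussianReal_const_mul hZ₂ q
  have hpq : IndepFun (fun ω => p * Z₁ ω) (fun ω => q * Z₂ ω) μ :=
    hindep.comp (measurable_const_mul p) (measurable_const_mul q)
  refine ⟨hp.aemeasurable.add hq.aemeasurable,
    (gaussianReal_add_gaussianReal_of_indepFun hpq hp.map_eq hq.map_eq).trans ?_⟩
  rw [mul_zero, mul_zero, add_zero, mul_one, mul_one]
  congr 1
  exact NNReal.eq hv

lemma hasLaw_gaussianReal_of_correlation {Z₁ Z₂ : Ω → ℝ} (hZ₁ : HasLaw Z₁ (gaussianReal 0 1) μ)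
    (hZ₂ : HasLaw Z₂ (gaussianReal 0 1) μ) (hindep : IndepFun Z₁ Z₂ μ) {σ ρ : ℝ} {v w : ℝ≥0}
    (hρ : ρ ∈ Icc (-1) 1) (hv : σ ^ 2 = v) (hw : 2 * (1 + ρ) * σ ^ 2 = w) {X Y : Ω → ℝ}
    (hY : Y = fun ω => σ * Z₁ ω) (hX : X = fun ω => σ * (ρ * Z₁ ω + √(1 - ρ ^ 2) * Z₂ ω)) :
    HasLaw X (gaussianReal 0 v) μ ∧ HasLaw Y (gaussianReal 0 v) μ ∧
      HasLaw (X + Y) (gaussianReal 0 w) μ := by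
  have hsqrt : √(1 - ρ ^ 2) ^ 2 = 1 - ρ ^ 2 := sq_sqrt (by nlinarith [hρ.1, hρ.2])
  have hlaw {p q : ℝ} {u : ℝ≥0} (hu : p ^ 2 + q ^ 2 = u) :
      HasLaw (fun ω => p * Z₁ ω + q * Z₂ ω) (gaussianReal 0 u) μ :=
    hasLaw_linearCombination_gaussianReal hZ₁ hZ₂ hindep hu
  subst hX hY
  refine ⟨(hlaw (p := σ * ρ) (q := σ * √(1 - ρ ^ 2)) ?_).congr (.of_forall fun ω => ?_),
    (hlaw (p := σ) (q := 0) ?_).congr (.of_forall fun ω => ?_),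
    (hlaw (p := σ * (1 + ρ)) (q := σ * √(1 - ρ ^ 2)) ?_).congr (.of_forall fun ω => ?_)⟩
  · rw [← hv, mul_pow _ √_, hsqrt]
    ring
  · ring
  · rw [← hv]
    ring
  · ring
  · rw [← hw, mul_pow _ √_, hsqrt]
    ring
  · rw [Pi.add_apply]
    ring

variable {X Y : Ω → ℝ} {v w : ℝ≥0} {g h : ℝ → ℝ} {b : ℝ}

lemma isEquivalent_measureReal_lt_comp_gaussianReal (hX : HasLaw X (gaussianReal 0 v) μ)
    (hv : v ≠ 0) (hg : IsAsymptoticInverse g h)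
    (hsq : ∀ l : ℝ, 0 < l → Tendsto (fun y => g (l * y) ^ 2 - g y ^ 2) atTop (𝓝 (log l / b))) :
    (fun y => μ.real {ω | y < h (X ω)}) ~[atTop] fun y => (gaussianReal 0 v).real (Ioi (g y)) := by
  have : IsProbabilityMeasure μ := hX.isProbabilityMeasure
  have htail : (fun y => μ.real {ω | g y < X ω}) = fun y => (gaussianReal 0 v).real (Ioi (g y)) :=
    funext fun y => hX.measureReal_eq measurableSet_Ioi
  rw [← htail]
  exact hg.isEquivalent_measureReal_lt
    (htail ▸ isRegularlyVarying_gaussianReal_real_Ioi hv hg.tendsto_atTop hsq)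

lemma isLittleO_measureReal_lt_neg_comp_gaussianReal (hX : HasLaw X (gaussianReal 0 v) μ)
    (hv : v ≠ 0) (hmono : Monotone h) (htop : Tendsto h atTop atTop)
    (hsmall : Tendsto (fun x => h (-x) / h x) atTop (𝓝 0)) (hb : 0 < b)
    (hg : IsAsymptoticInverse g h)
    (hsq : ∀ l : ℝ, 0 < l → Tendsto (fun y => g (l * y) ^ 2 - g y ^ 2) atTop (𝓝 (log l / b))) :
    (fun y => μ.real {ω | y < -h (X ω)}) =o[atTop]
      fun y => (gaussianReal 0 v).real (Ioi (g y)) := by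
  have : IsProbabilityMeasure μ := hX.isProbabilityMeasure
  have hneg : HasLaw (-X) (gaussianReal 0 v) μ := by
    simpa using gaussianReal_neg hX
  have hT := isEquivalent_measureReal_lt_comp_gaussianReal hneg hv hg hsq
  have hRV := (isRegularlyVarying_gaussianReal_real_Ioi hv hg.tendsto_atTop hsq).of_isEquivalent hT
  exact (isLittleO_measureReal_lt_neg_comp (by rw [neg_lt_zero]; positivity) hmono htop hsmall
    hRV).trans_isBigO hT.isBigO

lemma isLittleO_measureReal_lt_comp_and_gaussianReal
    (hXY : HasLaw (X + Y) (gaussianReal 0 w) μ) (hwv : w < 4 * v) (hg : IsAsymptoticInverse g h)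
    (hsq : ∀ l : ℝ, 0 < l → Tendsto (fun y => g (l * y) ^ 2 - g y ^ 2) atTop (𝓝 (log l / b))) :
    (fun y => μ.real {ω | y < h (X ω) ∧ y < h (Y ω)}) =o[atTop]
      fun y => (gaussianReal 0 v).real (Ioi (g y)) := by
  have : IsProbabilityMeasure μ := hXY.isProbabilityMeasure
  refine (Asymptotics.IsBigO.of_bound' ?_).trans_isLittleO
    (isLittleO_gaussianReal_real_Ioi_two_mul hwv hg.tendsto_atTop one_half_pos
      (hsq _ one_half_pos))
  filter_upwards [hg.lt_of_lt_apply (1 / 2) ⟨one_half_pos, one_half_lt_one⟩] with y hy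
  have htail : μ.real {ω | 2 * g (1 / 2 * y) < (X + Y) ω} =
      (gaussianReal 0 w).real (Ioi (2 * g (1 / 2 * y))) := hXY.measureReal_eq measurableSet_Ioi
  rw [norm_of_nonneg measureReal_nonneg, norm_of_nonneg measureReal_nonneg, ← htail]
  refine measureReal_mono fun ω hω => ?_
  have hXω := hy _ hω.1
  have hYω := hy _ hω.2
  simp only [Pi.add_apply, mem_ofPred_eq]
  linarith

end GaussianLaw

theorem increment_right_tail_asymptotics_general {Ω : Type*} {mΩ : MeasurableSpace Ω}
    {μ : Measure Ω} {X Y : Ω → ℝ} {v w : ℝ≥0} (hX : HasLaw X (gaussianReal 0 v) μ)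
    (hY : HasLaw Y (gaussianReal 0 v) μ) (hXY : HasLaw (X + Y) (gaussianReal 0 w) μ)
    (hwv : w < 4 * v) {h : ℝ → ℝ} {b : ℝ} (hmono : Monotone h) (hb : 0 < b)
    (hA : ConditionAPlus b h) (hsmall : Tendsto (fun x => h (-x) / h x) atTop (𝓝 0)) :
    Tendsto (fun y => μ.real {ω | y < h (X ω) - h (Y ω)} / μ.real {ω | y < h (X ω)}) atTop (𝓝 1) ∧
      IsRegularlyVarying (fun y => μ.real {ω | y < h (X ω) - h (Y ω)}) (-(1 / (2 * b * v))) := by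
  have : IsProbabilityMeasure μ := hX.isProbabilityMeasure
  have hv : v ≠ 0 := by
    rintro rfl
    simp at hwv
  obtain ⟨g, hg, hsq⟩ := hA.exists_isAsymptoticInverse hb hmono
  have hT := isEquivalent_measureReal_lt_comp_gaussianReal hX hv hg hsq
  have hRV := (isRegularlyVarying_gaussianReal_real_Ioi hv hg.tendsto_atTop hsq).of_isEquivalent hT
  have hleft := isLittleO_measureReal_lt_neg_comp_gaussianReal hY hv hmono (hA.tendsto_atTop hb)
    hsmall hb hg hsq
  have hjoint := isLittleO_measureReal_lt_comp_and_gaussianReal hXY hwv hg hsq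
  have hequiv := isEquivalent_measureReal_lt_sub hRV (hleft.trans_isBigO hT.symm.isBigO)
    (hjoint.trans_isBigO hT.symm.isBigO)
  exact ⟨(Asymptotics.isEquivalent_iff_tendsto_one
    (hRV.eventually_pos.mono fun _ hy => hy.ne')).1 hequiv, hRV.of_isEquivalent hequiv⟩

/-- For a centred bivariate Gaussian pair `(X_s, X_t)` with common
variance `σ²` and correlation `ρ ∈ (0,1)` (built from independent standard Gaussians
`Z₁, Z₂`), if `h` is strictly increasing, continuous, satisfies [A₊] with parameter
`b > 0` and `h(-x)/h(x) → 0` as `x → ∞`, then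
`P(h(X_t) - h(X_s) > y) / P(h(X_t) > y) → 1`; in particular the right tail of the
increment is regularly varying with the same index `-β₊ = -1/(2bσ²)` as that of `h(X_t)`. -/
theorem increment_right_tail_asymptotics
    {Ω : Type*} [MeasurableSpace Ω] (μ : Measure Ω) [IsProbabilityMeasure μ]
    (σ ρ : ℝ) (hσ : 0 < σ) (hρ : ρ ∈ Set.Ioo (0 : ℝ) 1)
    (Z₁ Z₂ : Ω → ℝ) (hZ₁meas : Measurable Z₁) (hZ₂meas : Measurable Z₂)
    (hZ₁law : μ.map Z₁ = gaussianReal 0 1) (hZ₂law : μ.map Z₂ = gaussianReal 0 1)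
    (hindep : IndepFun Z₁ Z₂ μ)
    (Xs Xt : Ω → ℝ)
    (hXs : Xs = fun ω => σ * Z₁ ω)
    (hXt : Xt = fun ω => σ * (ρ * Z₁ ω + Real.sqrt (1 - ρ ^ 2) * Z₂ ω))
    (h : ℝ → ℝ) (hmono : StrictMono h) (hcont : Continuous h)
    (b : ℝ) (hb : 0 < b)
    (f r : ℝ → ℝ)
    (hf : Differentiable ℝ f)
    (hf' : Tendsto (fun x => deriv f x / x) atTop (nhds 0))
    (hr : Tendsto r atTop (nhds 0))
    (hrep : ∀ᶠ x in atTop, h x = Real.exp (b * x ^ 2 + f x + r x))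
    (hsmall : Tendsto (fun x => h (-x) / h x) atTop (nhds 0)) :
    Tendsto
      (fun y => (μ {ω | h (Xt ω) - h (Xs ω) > y}).toReal / (μ {ω | h (Xt ω) > y}).toReal)
      atTop (nhds 1) ∧
    ∀ l : ℝ, 0 < l →
      Tendsto
        (fun y =>
          (μ {ω | h (Xt ω) - h (Xs ω) > l * y}).toReal /
            (μ {ω | h (Xt ω) - h (Xs ω) > y}).toReal)
        atTop (nhds (l ^ (-(1 / (2 * b * σ ^ 2))))) := by
  have hρ₁ : 0 ≤ 1 + ρ := by linarith [hρ.1]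
  let v : ℝ≥0 := ⟨σ ^ 2, sq_nonneg σ⟩
  let w : ℝ≥0 := ⟨2 * (1 + ρ) * σ ^ 2, by positivity⟩
  have hwv : w < 4 * v := by
    change 2 * (1 + ρ) * σ ^ 2 < 4 * σ ^ 2
    nlinarith [hρ.2, sq_pos_of_pos hσ]
  obtain ⟨ht, hs, hts⟩ := hasLaw_gaussianReal_of_correlation (v := v) (w := w)
    ⟨hZ₁meas.aemeasurable, hZ₁law⟩ ⟨hZ₂meas.aemeasurable, hZ₂law⟩ hindep
    ⟨by linarith, hρ.2.le⟩ rfl rfl hXs hXt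
  obtain ⟨hlim, hRV⟩ := increment_right_tail_asymptotics_general ht hs hts hwv hmono.monotone hb
    ⟨f, r, hf, hf', hr, hrep⟩ hsmall
  exact ⟨hlim, hRV.tendsto_div⟩
end

section
/- Let U, V, ξ, η be real random variables on a common probability space such that U, V, U₁ := U + ξ and V₁ := V + η all have continuous distribution functions, and set ε₁ := P(ξ ≠ 0), ε₂ := P(η ≠ 0). Then E[F_{U₁}(U₁) F_{V₁}(V₁)] ≤ E[F_U(U) F_V(V)] + (3/2)(ε₁ + ε₂) + ε₁ ε₂, where F_X denotes the distribution function of X. -/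
open MeasureTheory ProbabilityTheory Filter Set

/-- The distribution function of a real random variable `X` on `(Ω, μ)`. -/
noncomputable def distFun {Ω : Type*} [MeasurableSpace Ω] (μ : Measure Ω)
    (X : Ω → ℝ) : ℝ → ℝ := fun x => (μ {ω | X ω ≤ x}).toReal

/-!
The map `x ↦ F_X x` gains at most `P(X' < X)` when `X` is replaced by `X'`, since only mass that
moves downwards raises a distribution function. Evaluated at the moving point, `F_{X'}(X')` exceeds
`F_X(X)` by at most `P(X' < X)` where `X' ≤ X`, by monotonicity, and by at most `1` where `X < X'`.
Integrating against any weight in `[0, 1]`, the total gain is at most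
`P(X' < X) + P(X < X') = P(X' ≠ X)`. Changing `U` to `U + ξ` and then `V` to `V + η`, with the
other distribution function as the weight, costs `P(ξ ≠ 0) + P(η ≠ 0)`.
-/

lemma measureReal_ne_eq_add_measureReal_lt {Ω α : Type*} [MeasurableSpace Ω] {μ : Measure Ω}
    [IsFiniteMeasure μ] [LinearOrder α] [TopologicalSpace α] [OrderClosedTopology α]
    [SecondCountableTopology α] [MeasurableSpace α] [OpensMeasurableSpace α] {f g : Ω → α}
    (hf : AEMeasurable f μ) (hg : AEMeasurable g μ) :
    μ.real {ω | f ω ≠ g ω} = μ.real {ω | f ω < g ω} + μ.real {ω | g ω < f ω} := by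
  have hdisj : Disjoint {ω | f ω < g ω} {ω | g ω < f ω} :=
    disjoint_left.2 fun _ hlt hgt => lt_asymm hlt hgt
  rw [← measureReal_union₀ (nullMeasurableSet_lt hg hf) hdisj.aedisjoint]
  congr 1
  ext ω
  exact ne_iff_lt_or_gt

section DistFun

variable {Ω : Type*} [MeasurableSpace Ω] {μ : Measure Ω} {X X' Y : Ω → ℝ}

lemma monotone_distFun [IsFiniteMeasure μ] : Monotone (distFun μ X) := fun _ _ hxy =>
  measureReal_mono fun _ hω => le_trans hω hxy

lemma distFun_mem_unitInterval [IsProbabilityMeasure μ] (x : ℝ) :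
    distFun μ X x ∈ unitInterval :=
  ⟨measureReal_nonneg, measureReal_le_one⟩

lemma aemeasurable_distFun_comp [IsFiniteMeasure μ] (hY : AEMeasurable Y μ) :
    AEMeasurable (fun ω => distFun μ X (Y ω)) μ :=
  monotone_distFun.measurable.comp_aemeasurable hY

lemma distFun_le_distFun_add_measureReal_lt [IsFiniteMeasure μ] (x : ℝ) :
    distFun μ X' x ≤ distFun μ X x + μ.real {ω | X' ω < X ω} := by
  have hsub : {ω | X' ω ≤ x} ⊆ {ω | X ω ≤ x} ∪ {ω | X' ω < X ω} := fun ω hω =>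
    (le_or_gt (X ω) (X' ω)).imp (fun hle => hle.trans hω) id
  exact (measureReal_mono hsub).trans (measureReal_union_le _ _)

lemma distFun_apply_self_le [IsProbabilityMeasure μ] (ω : Ω) :
    distFun μ X' (X' ω) ≤
      distFun μ X (X ω) + μ.real {ω | X' ω < X ω} + {ω | X ω < X' ω}.indicator 1 ω := by
  rcases le_or_gt (X' ω) (X ω) with hle | hlt
  · calc distFun μ X' (X' ω)
      _ ≤ distFun μ X (X' ω) + μ.real {ω | X' ω < X ω} := distFun_le_distFun_add_measureReal_lt _
      _ ≤ distFun μ X (X ω) + μ.real {ω | X' ω < X ω} := by grw [monotone_distFun hle]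
      _ = _ := by rw [indicator_of_notMem (by simpa using hle), add_zero]
  · have hnonneg := (distFun_mem_unitInterval (μ := μ) (X := X) (X ω)).1
    calc distFun μ X' (X' ω)
      _ ≤ 1 := (distFun_mem_unitInterval _).2
      _ ≤ distFun μ X (X ω) + μ.real {ω | X' ω < X ω} + 1 :=
        le_add_of_nonneg_left (add_nonneg hnonneg measureReal_nonneg)
      _ = _ := by rw [indicator_of_mem (show ω ∈ {ω | X ω < X' ω} from hlt), Pi.one_apply]

lemma integrable_distFun_comp_mul [IsProbabilityMeasure μ] {Z : Ω → ℝ} (hY : AEMeasurable Y μ)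
    (hZ : AEMeasurable Z μ) (hZmem : ∀ᵐ ω ∂μ, Z ω ∈ unitInterval) :
    Integrable (fun ω => distFun μ X (Y ω) * Z ω) μ :=
  .of_mem_Icc 0 1 ((aemeasurable_distFun_comp hY).mul hZ) <| hZmem.mono fun _ hω =>
    unitInterval.mul_mem (distFun_mem_unitInterval _) hω

lemma integral_distFun_apply_self_mul_le [IsProbabilityMeasure μ] {Z : Ω → ℝ}
    (hX : AEMeasurable X μ) (hX' : AEMeasurable X' μ) (hZ : AEMeasurable Z μ)
    (hZmem : ∀ᵐ ω ∂μ, Z ω ∈ unitInterval) :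
    ∫ ω, distFun μ X' (X' ω) * Z ω ∂μ ≤
      ∫ ω, distFun μ X (X ω) * Z ω ∂μ + μ.real {ω | X' ω ≠ X ω} := by
  set p := μ.real {ω | X' ω < X ω}
  set up : Set Ω := {ω | X ω < X' ω}
  have hup : NullMeasurableSet up μ := nullMeasurableSet_lt hX hX'
  have hint_X := integrable_distFun_comp_mul (X := X) hX hZ hZmem
  have hint_up : Integrable (up.indicator (1 : Ω → ℝ)) μ := (integrable_const 1).indicator₀ hup
  have hint_gain : Integrable (fun ω => p + up.indicator 1 ω) μ :=
    (integrable_const p).add hint_up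
  have hle : ∀ᵐ ω ∂μ,
      distFun μ X' (X' ω) * Z ω ≤ distFun μ X (X ω) * Z ω + (p + up.indicator 1 ω) := by
    filter_upwards [hZmem] with ω hω
    have hgain : 0 ≤ p + up.indicator 1 ω :=
      add_nonneg measureReal_nonneg (indicator_nonneg (fun _ _ => zero_le_one) ω)
    calc distFun μ X' (X' ω) * Z ω
      _ ≤ (distFun μ X (X ω) + p + up.indicator 1 ω) * Z ω :=
        mul_le_mul_of_nonneg_right (distFun_apply_self_le ω) hω.1
      _ = distFun μ X (X ω) * Z ω + (p + up.indicator 1 ω) * Z ω := by ring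
      _ ≤ _ := by grw [mul_le_of_le_one_right hgain hω.2]
  calc ∫ ω, distFun μ X' (X' ω) * Z ω ∂μ
    _ ≤ ∫ ω, distFun μ X (X ω) * Z ω + (p + up.indicator 1 ω) ∂μ :=
      integral_mono_ae (integrable_distFun_comp_mul hX' hZ hZmem) (hint_X.add hint_gain) hle
    _ = ∫ ω, distFun μ X (X ω) * Z ω ∂μ + (p + μ.real up) := by
      rw [integral_add hint_X hint_gain, integral_add (integrable_const p) hint_up,
        integral_indicator₀ hup]
      simp
    _ = _ := by rw [measureReal_ne_eq_add_measureReal_lt hX' hX]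

end DistFun

theorem expectation_distFun_product_perturbation_bound_general
    {Ω : Type*} [MeasurableSpace Ω] (μ : Measure Ω) [IsProbabilityMeasure μ]
    (U V ξ η : Ω → ℝ) (hU : AEMeasurable U μ) (hV : AEMeasurable V μ)
    (hξ : AEMeasurable ξ μ) (hη : AEMeasurable η μ) :
    ∫ ω, distFun μ (U + ξ) (U ω + ξ ω) * distFun μ (V + η) (V ω + η ω) ∂μ ≤
      ∫ ω, distFun μ U (U ω) * distFun μ V (V ω) ∂μ +
        (μ.real {ω | ξ ω ≠ 0} + μ.real {ω | η ω ≠ 0}) := by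
  have hU_step := integral_distFun_apply_self_mul_le hU (hU.add hξ)
    (aemeasurable_distFun_comp (X := V + η) (hV.add hη)) (ae_of_all _ fun _ =>
      distFun_mem_unitInterval _)
  have hV_step := integral_distFun_apply_self_mul_le hV (hV.add hη)
    (aemeasurable_distFun_comp (X := U) hU) (ae_of_all _ fun _ => distFun_mem_unitInterval _)
  simp only [Pi.add_apply, ne_eq, add_eq_left] at hU_step hV_step
  simp only [mul_comm _ (distFun μ U _)] at hV_step
  linarith

/-- If `U`, `V`, `U₁ = U + ξ` and `V₁ = V + η` all have continuous
distribution functions, then with `ε₁ = P(ξ ≠ 0)`, `ε₂ = P(η ≠ 0)`,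
`E[F_{U₁}(U₁) F_{V₁}(V₁)] ≤ E[F_U(U) F_V(V)] + (3/2)(ε₁ + ε₂) + ε₁ ε₂`. -/
theorem expectation_distFun_product_perturbation_bound
    {Ω : Type*} [MeasurableSpace Ω] (μ : Measure Ω) [IsProbabilityMeasure μ]
    (U V ξ η : Ω → ℝ)
    (hU : Measurable U) (hV : Measurable V) (hξ : Measurable ξ) (hη : Measurable η)
    (hUc : Continuous (distFun μ U)) (hVc : Continuous (distFun μ V))
    (hU₁c : Continuous (distFun μ (U + ξ))) (hV₁c : Continuous (distFun μ (V + η))) :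
    (∫ ω, distFun μ (U + ξ) (U ω + ξ ω) * distFun μ (V + η) (V ω + η ω) ∂μ) ≤
      (∫ ω, distFun μ U (U ω) * distFun μ V (V ω) ∂μ) +
        3 / 2 * ((μ {ω | ξ ω ≠ 0}).toReal + (μ {ω | η ω ≠ 0}).toReal) +
          (μ {ω | ξ ω ≠ 0}).toReal * (μ {ω | η ω ≠ 0}).toReal := by
  have hbound := expectation_distFun_product_perturbation_bound_general μ U V ξ η
    hU.aemeasurable hV.aemeasurable hξ.aemeasurable hη.aemeasurable
  rw [measureReal_def, measureReal_def] at hbound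
  have hprod : 0 ≤ (μ {ω | ξ ω ≠ 0}).toReal * (μ {ω | η ω ≠ 0}).toReal := by positivity
  have hsum : 0 ≤ (μ {ω | ξ ω ≠ 0}).toReal + (μ {ω | η ω ≠ 0}).toReal := by positivity
  linarith
end
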